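/- arXiv:2209.11111 — 3 statements merged into one kernel-verified Lean document; each statement's English description precedes it below -/
import Mathlib

section
/- For all real numbers r1, r2 ≥ 0 with (r1, r2) ≠ (0, 0), one has ((r1 − r2)/√(r1² + r2²)) · K₁(√(r1² + r2²)) = ∫₁^∞ √2 · exp(−((r1 + r2)/√2)·u) · sin(((r1 − r2)/√2)·√(u² − 1)) du. -/
/-!
Put `z = √(r1² + r2²)` and write `(r1 + r2)/√2 = z cos φ`, `(r1 - r2)/√2 = z sin φ`; since
`r1 + r2 > 0`, the angle `φ` lies in `(-π/2, π/2)`. With `u = cosh s` the right-hand side becomes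
`√2 ∫₀^∞ exp (-z cos φ cosh s) sin (z sin φ sinh s) sinh s ds`, and the exponential and the sine
combine into the imaginary part of `exp (-z cosh (s - iφ))`.

The contour `ℝ - iφ` is moved to the real line. Let `F w = cosh w * exp (-z cosh w)`. By the
Cauchy–Riemann equations `∂/∂φ Re F (s - iφ) = ∂/∂s Im F (s - iφ)`, and `Im F (s - iφ)` vanishes at
`s = 0` and as `s → ∞`, so `∫₀^∞ Re F (s - iφ) ds` is independent of `φ` (`integral_reF`); at
`φ = 0` it equals `∫₀^∞ exp (-z cosh s) cosh s ds = K₁(z)` (`K1_eq`). The integral with `sinh s`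
follows because `sinh s * Im (exp (-z cosh (s - iφ)))` is `sin φ * Re F (s - iφ)` up to a multiple
of the `s`-derivative of `Im (exp (-z cosh (s - iφ)))` (`integral_exp_sin`). Everything is done with
real integrands, all dominated by a multiple of `exp (-κ cosh s) cosh² s` with
`0 < κ ≤ z cos φ`, locally uniformly in `φ`.
-/

open MeasureTheory

noncomputable section

/-- The modified Bessel function of the second kind `K₁`, via its integral representation
`K₁(z) = z · ∫₁^∞ e^{−zt} (t² − 1)^{1/2} dt`. -/
def K1 (z : ℝ) : ℝ := z * ∫ t in Set.Ioi (1:ℝ), Real.exp (-z*t) * Real.sqrt (t^2 - 1)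

open Real Set Filter Topology

/-- The weight `exp (-κ cosh s) cosh² s` which dominates all integrands below. -/
def weight (κ s : ℝ) : ℝ := exp (-κ * cosh s) * cosh s ^ 2

/-- Comes from `x³/6 ≤ exp x` at `x = κ cosh s`, and `exp s ≤ 2 cosh s`. -/
lemma weight_le {κ : ℝ} (hκ : 0 < κ) (s : ℝ) : weight κ s ≤ 12 / κ ^ 3 * exp (-s) := by
  unfold weight
  have hc : 0 < cosh s := cosh_pos s
  have h1 := pow_div_factorial_le_exp (κ * cosh s) (by positivity) 3
  have h2 : exp s ≤ 2 * cosh s := by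
    rw [cosh_eq]; have := exp_pos (-s); linarith
  have e1 : exp (-κ * cosh s) = (exp (κ * cosh s))⁻¹ := by rw [← exp_neg]; ring_nf
  have h3 : (3 : ℕ).factorial = 6 := rfl
  rw [h3] at h1
  push_cast at h1
  rw [e1, exp_neg, inv_mul_eq_div, ← div_eq_mul_inv, div_div, div_le_div_iff₀ (by positivity) (by positivity)]
  calc cosh s ^ 2 * (κ ^ 3 * exp s) ≤ cosh s ^ 2 * (κ ^ 3 * (2 * cosh s)) := by gcongr
    _ = 12 * ((κ * cosh s) ^ 3 / 6) := by ring
    _ ≤ _ := by gcongr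

lemma weight_integrable {κ : ℝ} (hκ : 0 < κ) : IntegrableOn (weight κ) (Ioi 0) := by
  refine Integrable.mono' (g := fun s => 12 / κ ^ 3 * exp (-s))
    ((integrableOn_exp_neg_Ioi 0).const_mul _) ?_ ?_
  · unfold weight
    exact (by fun_prop : Continuous _).aestronglyMeasurable
  · refine Eventually.of_forall fun s => ?_
    rw [norm_of_nonneg (by unfold weight; positivity)]
    exact weight_le hκ s

lemma integrableOn_of_le_weight {κ C : ℝ} (hκ : 0 < κ) {g : ℝ → ℝ} (hg : Continuous g)
    (h : ∀ s, |g s| ≤ C * weight κ s) : IntegrableOn g (Ioi 0) :=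
  Integrable.mono' ((weight_integrable hκ).const_mul C) hg.aestronglyMeasurable
    (Eventually.of_forall h)

lemma integral_deriv_eq_zero {κ C C' : ℝ} (hκ : 0 < κ) {G g : ℝ → ℝ}
    (hG : ∀ s, HasDerivAt G (g s) s) (hg : Continuous g) (h0 : G 0 = 0)
    (hGb : ∀ s, |G s| ≤ C * weight κ s) (hgb : ∀ s, |g s| ≤ C' * weight κ s) :
    ∫ s in Ioi (0:ℝ), g s = 0 := by
  have hC : 0 ≤ C := by
    have h := (abs_nonneg _).trans (hGb 0)
    have hw : 0 < weight κ 0 := by unfold weight; positivity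
    exact nonneg_of_mul_nonneg_left h hw
  have hlim : Tendsto G atTop (𝓝 0) := by
    refine squeeze_zero_norm (a := fun s => C * (12 / κ ^ 3 * exp (-s))) (fun s => ?_) ?_
    · exact (hGb s).trans (mul_le_mul_of_nonneg_left (weight_le hκ s) hC)
    · have := ((tendsto_exp_neg_atTop_nhds_zero).const_mul (12 / κ ^ 3)).const_mul C
      simpa using this
  rw [integral_Ioi_of_hasDerivAt_of_tendsto' (fun s _ => hG s)
    (integrableOn_of_le_weight hκ hg hgb) hlim, h0, sub_zero]

lemma exp_mul_le_weight {κ x T M s : ℝ} (hx : κ * cosh s ≤ x) (hT : |T| ≤ M * cosh s ^ 2) :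
    |exp (-x) * T| ≤ M * weight κ s := by
  unfold weight
  rw [abs_mul, abs_of_pos (exp_pos _)]
  calc exp (-x) * |T| ≤ exp (-κ * cosh s) * (M * cosh s ^ 2) := by
        gcongr; linarith
    _ = _ := by ring

lemma abs_cosh (s : ℝ) : |cosh s| = cosh s := abs_of_pos (cosh_pos s)

lemma abs_sinh_le_cosh (s : ℝ) : |sinh s| ≤ cosh s := by
  rw [abs_le]; constructor
  · have := exp_pos s; rw [cosh_eq, sinh_eq]; linarith
  · exact (sinh_lt_cosh s).le

lemma abs_mul_le_of {t v M : ℝ} (ht : |t| ≤ 1) (hv : |v| ≤ M) : |t * v| ≤ M := by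
  rw [abs_mul]
  nlinarith [abs_nonneg t, abs_nonneg v]

/-- Real part of `cosh w * exp (-z cosh w)` at `w = s - iφ`. -/
def reF (z φ s : ℝ) : ℝ :=
  exp (-(z * (cos φ * cosh s))) * (cos (z * (sin φ * sinh s)) * (cos φ * cosh s)
    + sin (z * (sin φ * sinh s)) * (sin φ * sinh s))

/-- Imaginary part of `cosh w * exp (-z cosh w)` at `w = s - iφ`. -/
def imF (z φ s : ℝ) : ℝ :=
  exp (-(z * (cos φ * cosh s))) * (sin (z * (sin φ * sinh s)) * (cos φ * cosh s)
    - cos (z * (sin φ * sinh s)) * (sin φ * sinh s))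

/-- The common value of `∂reF/∂φ` and `∂imF/∂s`. -/
def dF (z φ s : ℝ) : ℝ :=
  exp (-(z * (cos φ * cosh s))) *
    (sin (z * (sin φ * sinh s)) * (-z * ((cos φ * sinh s) * (cos φ * cosh s)) + cos φ * sinh s
        + z * ((sin φ * cosh s) * (sin φ * sinh s)))
      + cos (z * (sin φ * sinh s)) * (z * ((cos φ * sinh s) * (sin φ * sinh s))
        + z * ((sin φ * cosh s) * (cos φ * cosh s)) - sin φ * cosh s))

lemma hasDerivAt_reF (z φ s : ℝ) : HasDerivAt (fun φ => reF z φ s) (dF z φ s) φ := by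
  have hX := ((hasDerivAt_cos φ).mul_const (cosh s))
  have hY := ((hasDerivAt_sin φ).mul_const (sinh s))
  have h := ((hX.const_mul z).fun_neg.exp).fun_mul
    (((hY.const_mul z).cos.fun_mul hX).fun_add ((hY.const_mul z).sin.fun_mul hY))
  refine h.congr_deriv ?_
  unfold dF; ring

lemma hasDerivAt_imF (z φ s : ℝ) : HasDerivAt (fun s => imF z φ s) (dF z φ s) s := by
  have hX := ((Real.hasDerivAt_cosh s).const_mul (cos φ))
  have hY := ((Real.hasDerivAt_sinh s).const_mul (sin φ))
  have h := ((hX.const_mul z).fun_neg.exp).fun_mul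
    (((hY.const_mul z).sin.fun_mul hX).fun_sub ((hY.const_mul z).cos.fun_mul hY))
  refine h.congr_deriv ?_
  unfold dF; ring

lemma abs_trig_mul_le {t v s : ℝ} (ht : |t| ≤ 1) (hv : |v| ≤ cosh s) :
    |t * v| ≤ 1 * cosh s ^ 2 := by
  have := abs_mul_le_of ht hv
  nlinarith [one_le_cosh s]

lemma abs_reF_le {z κ φ : ℝ} (hκ : κ ≤ z * cos φ) (s : ℝ) :
    |reF z φ s| ≤ 2 * weight κ s := by
  unfold reF
  refine exp_mul_le_weight (by rw [← mul_assoc]; gcongr) ?_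
  have hX := abs_mul_le_of (abs_cos_le_one φ) (abs_cosh s).le
  have hY := abs_mul_le_of (abs_sin_le_one φ) (abs_sinh_le_cosh s)
  refine (abs_add_le _ _).trans ?_
  linarith [abs_trig_mul_le (abs_cos_le_one (z * (sin φ * sinh s))) hX,
    abs_trig_mul_le (abs_sin_le_one (z * (sin φ * sinh s))) hY]

lemma abs_imF_le {z κ φ : ℝ} (hκ : κ ≤ z * cos φ) (s : ℝ) :
    |imF z φ s| ≤ 2 * weight κ s := by
  unfold imF
  refine exp_mul_le_weight (by rw [← mul_assoc]; gcongr) ?_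
  have hX := abs_mul_le_of (abs_cos_le_one φ) (abs_cosh s).le
  have hY := abs_mul_le_of (abs_sin_le_one φ) (abs_sinh_le_cosh s)
  refine (abs_sub _ _).trans ?_
  linarith [abs_trig_mul_le (abs_sin_le_one (z * (sin φ * sinh s))) hX,
    abs_trig_mul_le (abs_cos_le_one (z * (sin φ * sinh s))) hY]

lemma abs_dF_le {z κ φ : ℝ} (hz : 0 ≤ z) (hκ : κ ≤ z * cos φ) (s : ℝ) :
    |dF z φ s| ≤ (4 * z + 2) * weight κ s := by
  unfold dF
  refine exp_mul_le_weight (by rw [← mul_assoc]; gcongr) ?_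
  have hc := one_le_cosh s
  have h1 := abs_mul_le_of (abs_cos_le_one φ) (abs_cosh s).le
  have h2 := abs_mul_le_of (abs_sin_le_one φ) (abs_cosh s).le
  have h3 := abs_mul_le_of (abs_cos_le_one φ) (abs_sinh_le_cosh s)
  have h4 := abs_mul_le_of (abs_sin_le_one φ) (abs_sinh_le_cosh s)
  have key : ∀ {p q : ℝ}, |p| ≤ cosh s → |q| ≤ cosh s → |z * (p * q)| ≤ z * cosh s ^ 2 := by
    intro p q hp hq
    rw [abs_mul, abs_mul, abs_of_nonneg hz, sq]
    gcongr
  have hlin : cosh s ≤ cosh s ^ 2 := by nlinarith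
  have k1 := abs_le.mp (key h3 h1)
  have k2 := abs_le.mp (key h2 h4)
  have k3 := abs_le.mp (key h3 h4)
  have k4 := abs_le.mp (key h2 h1)
  have l3 := abs_le.mp h3
  have l2 := abs_le.mp h2
  refine (abs_add_le _ _).trans ?_
  have a1 : |sin (z * (sin φ * sinh s)) * (-z * ((cos φ * sinh s) * (cos φ * cosh s))
      + cos φ * sinh s + z * ((sin φ * cosh s) * (sin φ * sinh s)))|
      ≤ (2 * z + 1) * cosh s ^ 2 :=
    abs_mul_le_of (abs_sin_le_one _) (abs_le.mpr ⟨by linarith, by linarith⟩)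
  have a2 : |cos (z * (sin φ * sinh s)) * (z * ((cos φ * sinh s) * (sin φ * sinh s))
        + z * ((sin φ * cosh s) * (cos φ * cosh s)) - sin φ * cosh s)|
      ≤ (2 * z + 1) * cosh s ^ 2 :=
    abs_mul_le_of (abs_cos_le_one _) (abs_le.mpr ⟨by linarith, by linarith⟩)
  linarith

/-- Moving the line of integration: `∫ reF` does not depend on `φ`, since its `φ`-derivative is
the integral of the `s`-derivative of `imF`, which vanishes at `0` and at infinity. -/
lemma hasDerivAt_integral_reF {z φ : ℝ} (hz : 0 < z) (hφ : 0 < cos φ) :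
    HasDerivAt (fun φ => ∫ s in Ioi (0:ℝ), reF z φ s) 0 φ := by
  have hκ : 0 < z * (cos φ / 2) := by positivity
  -- Near `φ` the decay rate `z cos x` stays above `z (cos φ / 2)`, which gives a uniform bound.
  have hs : {x : ℝ | cos φ / 2 < cos x} ∈ 𝓝 φ :=
    (isOpen_lt continuous_const continuous_cos).mem_nhds (half_lt_self hφ)
  have hle : ∀ x ∈ {x : ℝ | cos φ / 2 < cos x}, z * (cos φ / 2) ≤ z * cos x := fun x hx =>
    mul_le_mul_of_nonneg_left (le_of_lt hx) hz.le
  have hφs := hle φ (mem_of_mem_nhds hs)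
  have hcont : ∀ x, Continuous (reF z x) := fun x => by unfold reF; fun_prop
  have hcontd : ∀ x, Continuous (dF z x) := fun x => by unfold dF; fun_prop
  have h := (hasDerivAt_integral_of_dominated_loc_of_deriv_le (μ := volume.restrict (Ioi (0:ℝ)))
    (F := reF z) (F' := dF z) (bound := fun s => (4 * z + 2) * weight (z * (cos φ / 2)) s) hs
    (Eventually.of_forall fun x => (hcont x).aestronglyMeasurable)
    (integrableOn_of_le_weight hκ (hcont φ) (abs_reF_le hφs))
    (hcontd φ).aestronglyMeasurable
    (Eventually.of_forall fun s x hx => abs_dF_le hz.le (hle x hx) s)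
    ((weight_integrable hκ).const_mul _)
    (Eventually.of_forall fun s x _ => hasDerivAt_reF z x s)).2
  rwa [integral_deriv_eq_zero hκ (hasDerivAt_imF z φ) (hcontd φ) (by simp [imF])
    (abs_imF_le hφs) (abs_dF_le hz.le hφs)] at h

lemma integral_reF {z φ : ℝ} (hz : 0 < z) (hφ : φ ∈ Ioo (-(π / 2)) (π / 2)) :
    ∫ s in Ioi (0:ℝ), reF z φ s = ∫ s in Ioi (0:ℝ), exp (-z * cosh s) * cosh s := by
  have hd : ∀ x ∈ Ioo (-(π / 2)) (π / 2),
      HasDerivAt (fun φ => ∫ s in Ioi (0:ℝ), reF z φ s) 0 x :=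
    fun x hx => hasDerivAt_integral_reF hz (cos_pos_of_mem_Ioo hx)
  have h := isOpen_Ioo.is_const_of_deriv_eq_zero isPreconnected_Ioo
    (fun x hx => (hd x hx).differentiableAt.differentiableWithinAt)
    (fun x hx => (hd x hx).deriv) hφ
    (show (0:ℝ) ∈ Ioo (-(π / 2)) (π / 2) by constructor <;> linarith [pi_pos])
  rw [h]
  simp [reF]

/-- The integrand is `sin φ * reF` minus a multiple of the `s`-derivative of
`Im (exp (-z cosh (s - iφ)))`; that derivative integrates to zero. -/
lemma integral_exp_sin {z φ : ℝ} (hz : 0 < z) (hφ : φ ∈ Ioo (-(π / 2)) (π / 2)) :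
    ∫ s in Ioi (0:ℝ), exp (-(z * (cos φ * cosh s))) * sin (z * (sin φ * sinh s)) * sinh s
      = sin φ * ∫ s in Ioi (0:ℝ), exp (-z * cosh s) * cosh s := by
  have hc := cos_pos_of_mem_Ioo hφ
  have hκ : 0 < z * cos φ := by positivity
  -- `g` is the `s`-derivative of `Im (exp (-z cosh (s - iφ)))`.
  set g : ℝ → ℝ := fun s => exp (-(z * (cos φ * cosh s))) *
    (sin (z * (sin φ * sinh s)) * (-z * (cos φ * sinh s))
      + cos (z * (sin φ * sinh s)) * (z * (sin φ * cosh s))) with hg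
  have hgc : Continuous g := by fun_prop
  have hgb : ∀ s, |g s| ≤ (2 * z) * weight (z * cos φ) s := fun s => by
    refine exp_mul_le_weight (by rw [← mul_assoc]) ((abs_add_le _ _).trans ?_)
    have h3 := abs_mul_le_of (abs_cos_le_one φ) (abs_sinh_le_cosh s)
    have h2 := abs_mul_le_of (abs_sin_le_one φ) (abs_cosh s).le
    have hlin : cosh s ≤ cosh s ^ 2 := by nlinarith [one_le_cosh s]
    have e1 : |-z * (cos φ * sinh s)| ≤ z * cosh s ^ 2 := by
      rw [abs_mul, abs_neg, abs_of_pos hz]; gcongr; exact h3.trans hlin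
    have e2 : |z * (sin φ * cosh s)| ≤ z * cosh s ^ 2 := by
      rw [abs_mul, abs_of_pos hz]; gcongr; exact h2.trans hlin
    linarith [abs_mul_le_of (abs_sin_le_one (z * (sin φ * sinh s))) e1,
      abs_mul_le_of (abs_cos_le_one (z * (sin φ * sinh s))) e2]
  have hg0 : ∫ s in Ioi (0:ℝ), g s = 0 := by
    refine integral_deriv_eq_zero (C := 1) hκ
      (G := fun s => exp (-(z * (cos φ * cosh s))) * sin (z * (sin φ * sinh s)))
      (fun s => ?_) hgc (by simp) (fun s => ?_) hgb
    · have hX := ((Real.hasDerivAt_cosh s).const_mul (cos φ))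
      have hY := ((Real.hasDerivAt_sinh s).const_mul (sin φ))
      refine ((hX.const_mul z).fun_neg.exp.fun_mul (hY.const_mul z).sin).congr_deriv ?_
      rw [hg]; ring
    · refine exp_mul_le_weight (by rw [← mul_assoc]) ?_
      nlinarith [one_le_cosh s, abs_sin_le_one (z * (sin φ * sinh s))]
  have hre : IntegrableOn (reF z φ) (Ioi 0) :=
    integrableOn_of_le_weight hκ (by unfold reF; fun_prop) (abs_reF_le le_rfl)
  have hgi : IntegrableOn g (Ioi 0) := integrableOn_of_le_weight hκ hgc hgb
  have hcomb : ∀ s, exp (-(z * (cos φ * cosh s))) * sin (z * (sin φ * sinh s)) * sinh s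
      = sin φ * reF z φ s - cos φ / z * g s := fun s => by
    have hsc := sin_sq_add_cos_sq φ
    rw [hg, reF]
    field_simp
    linear_combination (-(sin (z * sin φ * sinh s) * sinh s)) * hsc
  simp_rw [hcomb]
  rw [integral_sub (hre.const_mul _) (hgi.const_mul _), integral_const_mul, integral_const_mul,
    hg0, integral_reF hz hφ]
  ring

lemma integral_Ioi_one_eq_cosh (f : ℝ → ℝ) :
    ∫ u in Ioi (1:ℝ), f u = ∫ s in Ioi (0:ℝ), sinh s * f (cosh s) := by
  have himg : cosh '' Ioi (0:ℝ) = Ioi 1 := by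
    ext y
    constructor
    · rintro ⟨x, hx, rfl⟩
      exact one_lt_cosh.mpr (ne_of_gt hx)
    · intro hy
      have hy' : (1:ℝ) < y := hy
      exact ⟨arcosh y, arcosh_pos hy', cosh_arcosh hy'.le⟩
  rw [← himg, integral_image_eq_integral_abs_deriv_smul measurableSet_Ioi
    (fun s _ => (Real.hasDerivAt_cosh s).hasDerivWithinAt)
    (cosh_strictMonoOn.injOn.mono Ioi_subset_Ici_self)]
  refine setIntegral_congr_fun measurableSet_Ioi fun s hs => ?_
  simp only [smul_eq_mul]
  rw [abs_of_pos (sinh_pos_iff.mpr hs)]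

lemma sqrt_cosh_sq_sub_one {s : ℝ} (hs : 0 < s) : √(cosh s ^ 2 - 1) = sinh s := by
  rw [cosh_sq, add_sub_cancel_right, sqrt_sq (sinh_pos_iff.mpr hs).le]

/-- The hyperbolic form of `K₁`, obtained by `t = cosh s` and an integration by parts. -/
lemma K1_eq {z : ℝ} (hz : 0 < z) : K1 z = ∫ s in Ioi (0:ℝ), exp (-z * cosh s) * cosh s := by
  have hsq : ∀ s, sinh s ^ 2 ≤ cosh s ^ 2 := fun s => by rw [cosh_sq]; linarith
  have hlin : ∀ s, cosh s ≤ cosh s ^ 2 := fun s => by nlinarith [one_le_cosh s]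
  have b1 : ∀ s, |exp (-(z * cosh s)) * cosh s| ≤ 1 * weight z s := fun s =>
    exp_mul_le_weight le_rfl (by rw [abs_cosh, one_mul]; exact hlin s)
  have b2 : ∀ s, |exp (-(z * cosh s)) * sinh s ^ 2| ≤ 1 * weight z s := fun s =>
    exp_mul_le_weight le_rfl (by rw [abs_of_nonneg (sq_nonneg _), one_mul]; exact hsq s)
  have i1 := integrableOn_of_le_weight hz (by fun_prop) b1
  have i2 := integrableOn_of_le_weight hz (by fun_prop) b2
  -- The integrand is the derivative of `exp (-z cosh s) sinh s`.
  have h0 : ∫ s in Ioi (0:ℝ), (exp (-(z * cosh s)) * cosh s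
      - z * (exp (-(z * cosh s)) * sinh s ^ 2)) = 0 := by
    refine integral_deriv_eq_zero (C := 1) (C' := 1 + z) hz
      (G := fun s => exp (-(z * cosh s)) * sinh s) (fun s => ?_) (by fun_prop) (by simp)
      (fun s => ?_) (fun s => ?_)
    · refine (((Real.hasDerivAt_cosh s).const_mul z).fun_neg.exp.fun_mul
        (Real.hasDerivAt_sinh s)).congr_deriv ?_
      ring
    · refine exp_mul_le_weight le_rfl ?_
      linarith [abs_sinh_le_cosh s, hlin s]
    · refine (abs_sub _ _).trans ?_
      rw [abs_mul z, abs_of_pos hz]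
      nlinarith [b1 s, b2 s]
  rw [integral_sub i1 (i2.const_mul z), integral_const_mul, sub_eq_zero] at h0
  simp_rw [neg_mul]
  rw [h0, K1, integral_Ioi_one_eq_cosh]
  congr 1
  refine setIntegral_congr_fun measurableSet_Ioi fun s hs => ?_
  rw [sqrt_cosh_sq_sub_one hs, neg_mul]
  ring

theorem stmt2 (r1 r2 : ℝ) (hr1 : 0 ≤ r1) (hr2 : 0 ≤ r2) (hne : (r1, r2) ≠ (0, 0)) :
    (r1 - r2)/Real.sqrt (r1^2 + r2^2) * K1 (Real.sqrt (r1^2 + r2^2)) =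
      ∫ u in Set.Ioi (1:ℝ),
        Real.sqrt 2 * Real.exp (-((r1 + r2)/Real.sqrt 2) * u) *
          Real.sin ((r1 - r2)/Real.sqrt 2 * Real.sqrt (u^2 - 1)) := by
  have hsum : 0 < r1 + r2 := by
    rcases hr1.lt_or_eq with h | h
    · linarith
    · rcases hr2.lt_or_eq with h' | h'
      · linarith
      · exact absurd (by rw [← h, ← h']) hne
  have hpos : 0 < r1 ^ 2 + r2 ^ 2 := by nlinarith [sq_nonneg (r1 - r2)]
  set z := √(r1 ^ 2 + r2 ^ 2) with hzdef
  have hz : 0 < z := sqrt_pos.mpr hpos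
  have hz2 : z ^ 2 = r1 ^ 2 + r2 ^ 2 := sq_sqrt hpos.le
  have h2 : √2 ^ 2 = (2:ℝ) := sq_sqrt (by norm_num)
  have h2p : 0 < √(2:ℝ) := by positivity
  set a := (r1 + r2) / √2 with ha
  set b := (r1 - r2) / √2 with hb
  have hap : 0 < a := by positivity
  have hab : a ^ 2 + b ^ 2 = z ^ 2 := by
    rw [ha, hb, div_pow, div_pow, h2, hz2]; ring
  -- The angle `φ` for which `(a, b) = z (cos φ, sin φ)`.
  set φ := arcsin (b / z) with hφdef
  have hbz : |b / z| < 1 := by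
    rw [abs_div, abs_of_pos hz, div_lt_one hz]
    exact abs_lt_of_sq_lt_sq (by nlinarith) hz.le
  have hφ : φ ∈ Ioo (-(π / 2)) (π / 2) :=
    ⟨neg_pi_div_two_lt_arcsin.mpr (abs_lt.mp hbz).1, arcsin_lt_pi_div_two.mpr (abs_lt.mp hbz).2⟩
  have hsin : sin φ = b / z := sin_arcsin (abs_lt.mp hbz).1.le (abs_lt.mp hbz).2.le
  have hcos : cos φ = a / z := by
    rw [hφdef, cos_arcsin, show 1 - (b / z) ^ 2 = (a / z) ^ 2 by field_simp; linarith,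
      sqrt_sq (by positivity)]
  have hmain := integral_exp_sin hz hφ
  rw [← K1_eq hz, hsin, hcos] at hmain
  rw [integral_Ioi_one_eq_cosh]
  have hrhs : ∫ s in Ioi (0:ℝ), sinh s * (√2 * exp (-a * cosh s) * sin (b * √(cosh s ^ 2 - 1)))
      = √2 * (b / z * K1 z) := by
    rw [← hmain, ← integral_const_mul]
    refine setIntegral_congr_fun measurableSet_Ioi fun s hs => ?_
    rw [sqrt_cosh_sq_sub_one hs, show z * (a / z * cosh s) = a * cosh s by field_simp,
      show z * (b / z * sinh s) = b * sinh s by field_simp, neg_mul]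
    ring
  rw [hrhs, hb]
  field_simp

end
end

section
/- For all real numbers r1, r2 ≥ 0 with (r1, r2) ≠ (0, 0), one has 2 · Re ∫₀^∞ (1 + 16 t²)^{−1/2} · exp(−(1/√2)·(r1·√(1 + 4it) + r2·√(1 − 4it))) · ((1/√2)·√(1 + 4it) + (1/√2)·√(1 − 4it)) dt = ((r1 + r2)/√(r1² + r2²)) · K₁(√(r1² + r2²)), where the complex square roots are principal-branch square roots. -/
/-!
Under the substitution `4t = sinh (2u)` the principal roots become `√(1 ± 4it) = cosh u ± i sinh u`
and `(1 + 16 t²)^(-1/2) dt` becomes `du / 2`. With `a = (r1 + r2) / √2 > 0` and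
`b = (r1 - r2) / √2`, so that `a² + b² = r1² + r2²`, the left side is therefore
`√2 · Re ∫₀^∞ exp (-(a cosh u + i b sinh u)) cosh u du`.

Write `a + ib = ρ exp (iθ)` with `|θ| < π / 2`. Then `a cosh u + i b sinh u = ρ cosh (u + iθ)`, and
the integral is that of the entire function `exp (-ρ cosh z) cosh (z - iθ)` over the half-line
`Im z = θ`, `Re z > 0`. Moving the contour to the positive real axis does not change the real part,
since the function is real on the imaginary axis (`re_integral_tiltedKernel_shift`). On the real
axis the real part of the integrand is `cos θ · exp (-ρ cosh u) cosh u`, whose integral is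
`(a / ρ) K₁(ρ)` (`re_integral_exp_cosh_sinh`, `K1_eq`).
-/

open MeasureTheory

noncomputable section

/-- Principal-branch complex square root. -/
def csqrt (z : ℂ) : ℂ := z ^ ((1:ℂ)/2)

open Set Filter Topology

/-! ### Estimates and the classical form of `K₁` -/

/-- The function `exp (-c cosh u) cosh² u`, the common majorant for every integrand below, decays
exponentially, because `exp (-c x) = O(x⁻³)` and `cosh u ≥ exp u / 2`. -/
lemma exists_cosh_sq_mul_exp_bound {c : ℝ} (hc : 0 < c) :
    ∃ C : ℝ, ∀ u : ℝ, Real.exp (-c * Real.cosh u) * Real.cosh u ^ 2 ≤ C * Real.exp (-1 * u) := by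
  refine ⟨12 / c ^ 3, fun u => ?_⟩
  have hx : 0 < Real.cosh u := Real.cosh_pos u
  have h1 := Real.pow_div_factorial_le_exp (c * Real.cosh u) (by positivity) 3
  have h2 : Real.exp u ≤ 2 * Real.cosh u := by
    rw [Real.cosh_eq]; linarith [Real.exp_pos (-u)]
  have e1 : Real.exp (-c * Real.cosh u) = (Real.exp (c * Real.cosh u))⁻¹ := by
    rw [← Real.exp_neg]; congr 1; ring
  have e2 : Real.exp (-1 * u) = (Real.exp u)⁻¹ := by
    rw [← Real.exp_neg]; congr 1; ring
  have h3 : (2 * Real.cosh u)⁻¹ ≤ (Real.exp u)⁻¹ := inv_anti₀ (Real.exp_pos u) h2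
  have h4 : (Real.exp (c * Real.cosh u))⁻¹ ≤ ((c * Real.cosh u) ^ 3 / 6)⁻¹ := by
    refine inv_anti₀ (by positivity) ?_
    simpa [Nat.factorial] using h1
  rw [e1, e2]
  calc _ ≤ ((c * Real.cosh u) ^ 3 / 6)⁻¹ * Real.cosh u ^ 2 := by gcongr
    _ = 12 / c ^ 3 * (2 * Real.cosh u)⁻¹ := by field_simp; norm_num
    _ ≤ _ := by gcongr

lemma integrableOn_of_norm_le_cosh_sq {E : Type*} [NormedAddCommGroup E] {f : ℝ → E}
    (hf : Continuous f) {c : ℝ} (hc : 0 < c)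
    (hb : ∀ u, ‖f u‖ ≤ Real.exp (-c * Real.cosh u) * Real.cosh u ^ 2) :
    IntegrableOn f (Ioi 0) := by
  obtain ⟨C, hC⟩ := exists_cosh_sq_mul_exp_bound hc
  refine Integrable.mono' ((exp_neg_integrableOn_Ioi 0 one_pos).const_mul C)
    hf.aestronglyMeasurable ?_
  exact Eventually.of_forall fun u => (hb u).trans (hC u)

lemma tendsto_zero_of_norm_le_cosh_sq {E : Type*} [NormedAddCommGroup E] {f : ℝ → E}
    {c : ℝ} (hc : 0 < c) (hb : ∀ u, ‖f u‖ ≤ Real.exp (-c * Real.cosh u) * Real.cosh u ^ 2) :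
    Tendsto f atTop (𝓝 0) := by
  obtain ⟨C, hC⟩ := exists_cosh_sq_mul_exp_bound hc
  refine squeeze_zero_norm (fun u => (hb u).trans (hC u)) ?_
  have : Tendsto (fun u : ℝ => Real.exp (-1 * u)) atTop (𝓝 0) := by
    refine Real.tendsto_exp_neg_atTop_nhds_zero.congr fun u => by simp
  simpa using this.const_mul C

lemma cosh_le_cosh_sq (u : ℝ) : Real.cosh u ≤ Real.cosh u ^ 2 := by
  nlinarith [Real.one_le_cosh u]

/-- The substitution `t = cosh u` turns the integral defining `K₁` into that of
`ρ exp (-ρ cosh u) sinh² u`, and an integration by parts against `-exp (-ρ cosh u) sinh u` then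
gives the classical form. -/
lemma K1_eq_s4 (ρ : ℝ) (hρ : 0 < ρ) :
    K1 ρ = ∫ u in Ioi (0:ℝ), Real.exp (-ρ * Real.cosh u) * Real.cosh u := by
  have himg : Real.cosh '' Ioi 0 = Ioi 1 := by
    ext t
    constructor
    · rintro ⟨u, hu, rfl⟩
      exact Real.one_lt_cosh.2 (ne_of_gt hu)
    · intro ht
      exact ⟨Real.arcosh t, Real.arcosh_pos ht, Real.cosh_arcosh (le_of_lt ht)⟩
  have hsub : (∫ t in Set.Ioi (1:ℝ), Real.exp (-ρ*t) * Real.sqrt (t^2 - 1)) =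
      ∫ u in Ioi (0:ℝ), Real.exp (-ρ * Real.cosh u) * Real.sinh u ^ 2 := by
    rw [← himg, integral_image_eq_integral_abs_deriv_smul measurableSet_Ioi
      (fun x _ => (Real.hasDerivAt_cosh x).hasDerivWithinAt)
      (Real.cosh_strictMonoOn.injOn.mono Ioi_subset_Ici_self)]
    refine setIntegral_congr_fun measurableSet_Ioi fun u hu => ?_
    have hs : 0 ≤ Real.sinh u := Real.sinh_nonneg_iff.2 (le_of_lt hu)
    have : Real.cosh u ^ 2 - 1 = Real.sinh u ^ 2 := by rw [Real.cosh_sq]; ring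
    simp only [smul_eq_mul]
    rw [this, Real.sqrt_sq hs, abs_of_nonneg hs]; ring
  have i1 : IntegrableOn (fun u => Real.exp (-ρ * Real.cosh u) * Real.sinh u ^ 2) (Ioi 0) := by
    refine integrableOn_of_norm_le_cosh_sq (by fun_prop) hρ fun u => ?_
    rw [Real.norm_of_nonneg (by positivity)]
    rw [Real.cosh_sq]
    gcongr
    linarith
  have i2 : IntegrableOn (fun u => Real.exp (-ρ * Real.cosh u) * Real.cosh u) (Ioi 0) := by
    refine integrableOn_of_norm_le_cosh_sq (by fun_prop) hρ fun u => ?_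
    have := Real.cosh_pos u
    rw [Real.norm_of_nonneg (by positivity)]
    gcongr
    exact cosh_le_cosh_sq u
  have hlim : Tendsto (fun u => -(Real.exp (-ρ * Real.cosh u) * Real.sinh u)) atTop (𝓝 0) := by
    refine tendsto_zero_of_norm_le_cosh_sq hρ fun u => ?_
    rw [norm_neg, norm_mul, Real.norm_of_nonneg (Real.exp_pos _).le]
    gcongr
    refine le_trans ?_ (cosh_le_cosh_sq u)
    rw [Real.norm_eq_abs]
    refine abs_le_of_sq_le_sq ?_ (Real.cosh_pos u).le
    rw [Real.cosh_sq]; linarith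
  have hder : ∀ u ∈ Ici (0:ℝ), HasDerivAt (fun u => -(Real.exp (-ρ * Real.cosh u) * Real.sinh u))
      (ρ * (Real.exp (-ρ * Real.cosh u) * Real.sinh u ^ 2) -
        Real.exp (-ρ * Real.cosh u) * Real.cosh u) u := fun u _ =>
    ((((Real.hasDerivAt_cosh u).const_mul (-ρ)).exp).mul (Real.hasDerivAt_sinh u)).neg.congr_deriv
      (by ring)
  have h_int : IntegrableOn (fun u => ρ * (Real.exp (-ρ * Real.cosh u) * Real.sinh u ^ 2) -
      Real.exp (-ρ * Real.cosh u) * Real.cosh u) (Ioi 0) := (i1.const_mul ρ).sub i2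
  have key := integral_Ioi_of_hasDerivAt_of_tendsto' hder h_int hlim
  rw [integral_sub (i1.const_mul ρ) i2, integral_const_mul] at key
  rw [K1, hsub]
  simpa [sub_eq_zero] using key

/-! ### The contour shift -/

/-- The entire function `exp (-ρ cosh z) cosh (z - iθ)`. The shift by `iθ` in the second factor
makes it equal to `exp (-ρ cosh (u + iθ)) cosh u` on the line `Im z = θ`, and it is real on the
imaginary axis. -/
def tiltedKernel (ρ θ : ℝ) (z : ℂ) : ℂ :=
  Complex.exp (-ρ * Complex.cosh z) * Complex.cosh (z - θ * Complex.I)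

lemma cosh_re_im (x y : ℝ) : Complex.cosh (x + y * Complex.I) =
    ((Real.cosh x * Real.cos y : ℝ) : ℂ) + ((Real.sinh x * Real.sin y : ℝ) : ℂ) * Complex.I := by
  rw [Complex.cosh_add, Complex.cosh_mul_I, Complex.sinh_mul_I]
  push_cast; ring

lemma norm_cosh_le (z : ℂ) : ‖Complex.cosh z‖ ≤ Real.cosh z.re := by
  rw [Complex.cosh, Real.cosh_eq, norm_div]
  have := norm_add_le (Complex.exp z) (Complex.exp (-z))
  rw [Complex.norm_exp, Complex.norm_exp, Complex.neg_re] at this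
  simp only [Complex.norm_ofNat]
  gcongr

/-- The hypothesis on `y` says that the line `Im z = y` is at least as good for the decay of
`exp (-ρ cosh z)` as the line `Im z = θ`. -/
lemma norm_tiltedKernel_le {ρ θ : ℝ} (hρ : 0 < ρ) {y : ℝ} (hy : Real.cos θ ≤ Real.cos y) (x : ℝ) :
    ‖tiltedKernel ρ θ (x + y * Complex.I)‖ ≤
      Real.exp (-(ρ * Real.cos θ) * Real.cosh x) * Real.cosh x ^ 2 := by
  rw [tiltedKernel, norm_mul, Complex.norm_exp]
  have h1 := norm_cosh_le (x + y * Complex.I - θ * Complex.I)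
  have h2 : (-(ρ : ℂ) * Complex.cosh (x + y * Complex.I)).re = -(ρ * Real.cos y) * Real.cosh x := by
    rw [cosh_re_im, ← Complex.ofReal_neg, Complex.re_ofReal_mul]
    simp only [Complex.add_re, Complex.ofReal_re, Complex.re_ofReal_mul, Complex.I_re]
    ring
  have h3 : (x + y * Complex.I - θ * Complex.I : ℂ).re = x := by simp
  rw [h3] at h1
  rw [h2]
  have := Real.cosh_pos x
  gcongr
  exact h1.trans (cosh_le_cosh_sq x)

lemma continuous_tiltedKernel (ρ θ : ℝ) : Continuous (tiltedKernel ρ θ) := by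
  unfold tiltedKernel; fun_prop

lemma differentiable_tiltedKernel (ρ θ : ℝ) : Differentiable ℂ (tiltedKernel ρ θ) := by
  unfold tiltedKernel; fun_prop

lemma integrableOn_tiltedKernel {ρ θ y : ℝ} (hρ : 0 < ρ) (hθ : 0 < Real.cos θ)
    (hy : Real.cos θ ≤ Real.cos y) :
    IntegrableOn (fun x : ℝ => tiltedKernel ρ θ (x + y * Complex.I)) (Ioi 0) := by
  refine integrableOn_of_norm_le_cosh_sq ?_ (mul_pos hρ hθ) (norm_tiltedKernel_le hρ hy)
  exact (continuous_tiltedKernel ρ θ).comp (by fun_prop)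

/-- Cauchy's theorem on the rectangle with corners `0` and `R + iθ`: the right side vanishes as
`R → ∞`, and the left side contributes a purely imaginary number, so the real parts of the
integrals over the two half-lines agree. -/
lemma re_integral_tiltedKernel_shift {ρ θ : ℝ} (hρ : 0 < ρ) (hθ : |θ| < Real.pi / 2) :
    (∫ x in Ioi (0:ℝ), tiltedKernel ρ θ (x + θ * Complex.I)).re =
      (∫ x in Ioi (0:ℝ), tiltedKernel ρ θ x).re := by
  have hcos : 0 < Real.cos θ := Real.cos_pos_of_mem_Ioo (abs_lt.1 hθ)
  have hle : ∀ y ∈ uIcc 0 θ, Real.cos θ ≤ Real.cos y := by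
    intro y hy
    have hy' : |y| ≤ |θ| := by
      simpa using abs_sub_left_of_mem_uIcc hy
    rw [← Real.cos_abs θ, ← Real.cos_abs y]
    exact Real.cos_le_cos_of_nonneg_of_le_pi (abs_nonneg _) (by linarith [Real.pi_pos]) hy'
  have hA := intervalIntegral_tendsto_integral_Ioi 0
    (integrableOn_tiltedKernel hρ hcos (hle 0 left_mem_uIcc)) tendsto_id
  have hB := intervalIntegral_tendsto_integral_Ioi 0
    (integrableOn_tiltedKernel hρ hcos le_rfl) tendsto_id
  have hside : Tendsto (fun R : ℝ => ∫ y in (0:ℝ)..θ, tiltedKernel ρ θ (R + y * Complex.I))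
      atTop (𝓝 0) := by
    have h0 : Tendsto (fun R : ℝ =>
        Real.exp (-(ρ * Real.cos θ) * Real.cosh R) * Real.cosh R ^ 2) atTop (𝓝 0) :=
      tendsto_zero_of_norm_le_cosh_sq (mul_pos hρ hcos) fun u => by
        have := Real.cosh_pos u
        rw [Real.norm_of_nonneg (by positivity)]
    refine squeeze_zero_norm (fun R => intervalIntegral.norm_integral_le_of_norm_le_const
      fun y hy => norm_tiltedKernel_le hρ (hle y (uIoc_subset_uIcc hy)) R) ?_
    simpa using h0.mul_const |θ - 0|
  have hleft : (Complex.I * ∫ y in (0:ℝ)..θ, tiltedKernel ρ θ ((0:ℝ) + y * Complex.I)).re = 0 := by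
    have : ∀ y : ℝ, tiltedKernel ρ θ ((0:ℝ) + y * Complex.I) =
        ((Real.exp (-ρ * Real.cos y) * Real.cos (y - θ) : ℝ) : ℂ) := by
      intro y
      rw [tiltedKernel, Complex.ofReal_zero, zero_add, ← sub_mul, Complex.cosh_mul_I,
        ← Complex.ofReal_sub, Complex.cosh_mul_I]
      push_cast; rfl
    simp_rw [this]
    rw [intervalIntegral.integral_ofReal]
    simp
  have hrect : ∀ R : ℝ, (∫ x in (0:ℝ)..R, tiltedKernel ρ θ (x + (0:ℝ) * Complex.I)).re -
      (∫ x in (0:ℝ)..R, tiltedKernel ρ θ (x + θ * Complex.I)).re +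
      (Complex.I * ∫ y in (0:ℝ)..θ, tiltedKernel ρ θ (R + y * Complex.I)).re = 0 := by
    intro R
    have := Complex.integral_boundary_rect_eq_zero_of_differentiableOn (tiltedKernel ρ θ)
      0 (R + θ * Complex.I) (differentiable_tiltedKernel ρ θ).differentiableOn
    have := congrArg Complex.re this
    simp only [Complex.add_re, Complex.sub_re, Complex.zero_re, Complex.zero_im, smul_eq_mul,
      Complex.ofReal_re, Complex.add_im, Complex.ofReal_im, Complex.re_ofReal_mul,
      Complex.im_ofReal_mul, Complex.I_re, Complex.I_im, mul_zero, add_zero, mul_one,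
      zero_add] at this
    rw [hleft, sub_zero] at this
    exact this
  have hlim := (((Complex.continuous_re.tendsto _).comp hA).sub
    ((Complex.continuous_re.tendsto _).comp hB)).add
    ((Complex.continuous_re.tendsto _).comp (hside.const_mul Complex.I))
  have hlim0 := tendsto_nhds_unique (hlim.congr fun R => by simpa using hrect R)
    (tendsto_const_nhds (x := (0:ℝ)))
  simp at hlim0
  linarith

/-- Writing `a + ib = ρ exp (iθ)`, the integrand on the left is `exp (-ρ cosh (u + iθ)) cosh u`,
and the contour shift removes `θ` from the exponent at the cost of a factor `cos θ = a / ρ`. -/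
lemma re_integral_exp_cosh_sinh {a b : ℝ} (ha : 0 < a) :
    (∫ u in Ioi (0:ℝ), Complex.exp (-(a * Real.cosh u + b * Real.sinh u * Complex.I)) *
        Real.cosh u).re =
      a / Real.sqrt (a ^ 2 + b ^ 2) *
        ∫ u in Ioi (0:ℝ), Real.exp (-Real.sqrt (a ^ 2 + b ^ 2) * Real.cosh u) * Real.cosh u := by
  set w : ℂ := ⟨a, b⟩ with hw
  set θ := Complex.arg w with hθdef
  set ρ := Real.sqrt (a ^ 2 + b ^ 2) with hρdef
  have hρ : 0 < ρ := Real.sqrt_pos.2 (by positivity)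
  have hnorm : ‖w‖ = ρ := by
    rw [Complex.norm_eq_sqrt_sq_add_sq]
  have hcos : ρ * Real.cos θ = a := by rw [← hnorm, Complex.norm_mul_cos_arg]
  have hsin : ρ * Real.sin θ = b := by rw [← hnorm, Complex.norm_mul_sin_arg]
  have hθ : |θ| < Real.pi / 2 := Complex.abs_arg_lt_pi_div_two_iff.2 (Or.inl ha)
  have hcp : 0 < Real.cos θ := Real.cos_pos_of_mem_Ioo (abs_lt.1 hθ)
  have h1 : ∀ u : ℝ, Complex.exp (-(a * Real.cosh u + b * Real.sinh u * Complex.I)) *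
        Real.cosh u = tiltedKernel ρ θ (u + θ * Complex.I) := by
    intro u
    rw [tiltedKernel, cosh_re_im, ← hcos, ← hsin, add_sub_cancel_right]
    push_cast
    congr 2
    ring
  have h2 : ∀ u : ℝ, (tiltedKernel ρ θ u).re =
      Real.cos θ * (Real.exp (-ρ * Real.cosh u) * Real.cosh u) := by
    intro u
    have e1 : Complex.exp (-ρ * Complex.cosh u) = ((Real.exp (-ρ * Real.cosh u) : ℝ) : ℂ) := by
      push_cast; rfl
    have e2 : (u - θ * Complex.I : ℂ) = u + ((-θ : ℝ) : ℂ) * Complex.I := by push_cast; ring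
    rw [tiltedKernel, e1, e2, cosh_re_im, Complex.re_ofReal_mul]
    simp only [Complex.add_re, Complex.ofReal_re, Complex.re_ofReal_mul, Complex.I_re,
      Real.cos_neg]
    ring
  have h_int : IntegrableOn (fun u : ℝ => tiltedKernel ρ θ u) (Ioi 0) := by
    have := integrableOn_tiltedKernel (y := 0) hρ hcp (by simpa using Real.cos_le_one θ)
    simpa using this
  simp_rw [h1]
  rw [re_integral_tiltedKernel_shift hρ hθ]
  have h3 : (∫ x in Ioi (0:ℝ), tiltedKernel ρ θ x).re =
      ∫ x in Ioi (0:ℝ), (tiltedKernel ρ θ x).re := (integral_re h_int).symm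
  rw [h3]
  simp_rw [h2]
  rw [integral_const_mul, ← hcos]
  field_simp

/-! ### The substitution `4t = sinh (2u)` -/

lemma csqrt_sq {w : ℂ} (hw : 0 < w.re) : csqrt (w ^ 2) = w := by
  rw [csqrt, one_div, Complex.sq_cpow_two_inv hw]

/-- Under `4t = sinh (2u)`, the number `1 + 4it` is the square of `cosh u + i sinh u`, which lies
in the right half-plane. -/
lemma csqrt_one_add (u : ℝ) :
    csqrt (1 + 4 * Complex.I * ((Real.sinh (2 * u) / 4 : ℝ) : ℂ)) =
      Real.cosh u + Real.sinh u * Complex.I := by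
  rw [← csqrt_sq (w := Real.cosh u + Real.sinh u * Complex.I)]
  · congr 1
    have h : (Real.cosh u : ℂ) ^ 2 = (Real.sinh u : ℂ) ^ 2 + 1 := by
      exact_mod_cast Real.cosh_sq u
    rw [Real.sinh_two_mul]
    push_cast at h ⊢
    linear_combination -h - (Complex.sinh u) ^ 2 * Complex.I_sq
  · simpa [-Complex.ofReal_cosh, -Complex.ofReal_sinh] using Real.cosh_pos u

lemma csqrt_one_sub (u : ℝ) :
    csqrt (1 - 4 * Complex.I * ((Real.sinh (2 * u) / 4 : ℝ) : ℂ)) =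
      Real.cosh u - Real.sinh u * Complex.I := by
  have := csqrt_one_add (-u)
  rw [mul_neg, Real.sinh_neg, Real.sinh_neg, Real.cosh_neg] at this
  rw [sub_eq_add_neg, sub_eq_add_neg, ← mul_neg, ← neg_mul]
  convert! this using 2
  · push_cast; ring
  · push_cast; ring

lemma sinh_two_mul_div_four_image : (fun u : ℝ => Real.sinh (2 * u) / 4) '' Ioi 0 = Ioi 0 := by
  ext t
  constructor
  · rintro ⟨u, hu, rfl⟩
    have : 0 < Real.sinh (2 * u) := Real.sinh_pos_iff.2 (mul_pos two_pos hu)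
    exact div_pos this (by norm_num)
  · intro ht
    refine ⟨Real.arsinh (4 * t) / 2, ?_, ?_⟩
    · exact div_pos (Real.arsinh_pos_iff.2 (mul_pos (by norm_num) ht)) two_pos
    · simp only
      rw [mul_div_cancel₀ _ (two_ne_zero), Real.sinh_arsinh]; ring

theorem stmt4 (r1 r2 : ℝ) (hr1 : 0 ≤ r1) (hr2 : 0 ≤ r2) (hne : (r1, r2) ≠ (0, 0)) :
    2 * (∫ t in Set.Ioi (0:ℝ),
        (1/(Real.sqrt (1 + 16*t^2) : ℂ)) *
          Complex.exp (-(1/(Real.sqrt 2 : ℂ)) *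
            (r1 * csqrt (1 + 4*Complex.I*t) + r2 * csqrt (1 - 4*Complex.I*t))) *
          ((1/(Real.sqrt 2 : ℂ)) * csqrt (1 + 4*Complex.I*t) +
            (1/(Real.sqrt 2 : ℂ)) * csqrt (1 - 4*Complex.I*t))).re
      = (r1 + r2)/Real.sqrt (r1^2 + r2^2) * K1 (Real.sqrt (r1^2 + r2^2)) := by
  set a := (r1 + r2) / Real.sqrt 2 with ha_def
  set b := (r1 - r2) / Real.sqrt 2 with hb_def
  have hs : 0 < Real.sqrt 2 := by positivity
  have hs2 : Real.sqrt 2 ^ 2 = 2 := Real.sq_sqrt (by norm_num)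
  have hsum : 0 < r1 + r2 := by
    rcases hr1.lt_or_eq with h | h
    · linarith
    · rcases hr2.lt_or_eq with h' | h'
      · linarith
      · exact absurd (by rw [← h, ← h']) hne
  have ha : 0 < a := div_pos hsum hs
  have hab : a ^ 2 + b ^ 2 = r1 ^ 2 + r2 ^ 2 := by
    rw [ha_def, hb_def, div_pow, div_pow, hs2]; ring
  have hρ : 0 < Real.sqrt (r1 ^ 2 + r2 ^ 2) := by
    rw [← hab]; exact Real.sqrt_pos.2 (by positivity)
  have hderiv : ∀ u ∈ Ioi (0:ℝ), HasDerivWithinAt (fun u : ℝ => Real.sinh (2 * u) / 4)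
      (Real.cosh (2 * u) / 2) (Ioi 0) u := by
    intro u _
    have := (((hasDerivAt_id u).const_mul 2).sinh).div_const 4
    refine HasDerivAt.hasDerivWithinAt ?_
    convert! this using 1
    simp; ring
  have hinj : InjOn (fun u : ℝ => Real.sinh (2 * u) / 4) (Ioi 0) := by
    intro x _ y _ h
    have : Real.sinh (2 * x) = Real.sinh (2 * y) := by simpa using h
    linarith [Real.sinh_injective this]
  -- The Jacobian `cosh (2u) / 2` cancels `(1 + 16 t²)^(-1/2) = 1 / cosh (2u)`.
  have key : ∀ u : ℝ, |Real.cosh (2 * u) / 2| •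
      ((1/(Real.sqrt (1 + 16*(Real.sinh (2 * u) / 4)^2) : ℂ)) *
          Complex.exp (-(1/(Real.sqrt 2 : ℂ)) *
            (r1 * csqrt (1 + 4*Complex.I*((Real.sinh (2 * u) / 4 : ℝ) : ℂ)) +
              r2 * csqrt (1 - 4*Complex.I*((Real.sinh (2 * u) / 4 : ℝ) : ℂ)))) *
          ((1/(Real.sqrt 2 : ℂ)) * csqrt (1 + 4*Complex.I*((Real.sinh (2 * u) / 4 : ℝ) : ℂ)) +
            (1/(Real.sqrt 2 : ℂ)) * csqrt (1 - 4*Complex.I*((Real.sinh (2 * u) / 4 : ℝ) : ℂ)))) =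
      ((1 / Real.sqrt 2 : ℝ) : ℂ) *
        (Complex.exp (-(a * Real.cosh u + b * Real.sinh u * Complex.I)) * Real.cosh u) := by
    intro u
    have hc : 0 < Real.cosh (2 * u) := Real.cosh_pos _
    have hsq : Real.sqrt (1 + 16*(Real.sinh (2 * u) / 4)^2) = Real.cosh (2 * u) := by
      rw [show 1 + 16*(Real.sinh (2 * u) / 4)^2 = Real.cosh (2 * u) ^ 2 by
        rw [Real.cosh_sq]; ring]
      exact Real.sqrt_sq hc.le
    have hexp : -(1/(Real.sqrt 2 : ℂ)) * (r1 * (Real.cosh u + Real.sinh u * Complex.I) +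
        r2 * (Real.cosh u - Real.sinh u * Complex.I)) =
        -(a * Real.cosh u + b * Real.sinh u * Complex.I) := by
      rw [ha_def, hb_def]; push_cast; ring
    rw [csqrt_one_add, csqrt_one_sub, hsq, hexp, abs_of_pos (by positivity), Complex.real_smul]
    have hc' : (Real.cosh (2 * u) : ℂ) ≠ 0 := by exact_mod_cast hc.ne'
    have hs' : (Real.sqrt 2 : ℂ) ≠ 0 := by exact_mod_cast hs.ne'
    generalize Complex.exp (-(a * Real.cosh u + b * Real.sinh u * Complex.I)) = E
    rw [Complex.ofReal_div, Complex.ofReal_div, Complex.ofReal_one, Complex.ofReal_ofNat]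
    field_simp
    ring
  rw [← sinh_two_mul_div_four_image, integral_image_eq_integral_abs_deriv_smul measurableSet_Ioi hderiv hinj]
  simp_rw [key]
  rw [integral_const_mul, Complex.re_ofReal_mul, re_integral_exp_cosh_sinh ha, hab, K1_eq_s4 _ hρ,
    ha_def]
  field_simp
  rw [hs2]

end
end

section
/- Let 0 < a < 1 and c = a/(1 + a²). For all integers k, ℓ one has the single contour integral formula I_a(k, ℓ) = −(i^{−|k|−|ℓ|} / (2(1 + a²) · 2πi)) · ∮_{|w|=1} (dw/w) · G(w)^{|ℓ|} · G(1/w)^{|k|} / (√(w² + 2c) · √((1/w)² + 2c)), where the contour is the positively oriented unit circle. -/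
/-! Write `β = √(2c)/2 ∈ (0, 1/2)`, so that `c/2 = β²`, and `A = u₁ + 1/u₁`, `B = u₂ + 1/u₂`.
The double integral is turned into the single one through a triple integral.

* For `‖w‖ = 1`, the residue theorem in the variable `u` gives
  `∮ du/u · u^ℓ / (w - iβ(u + 1/u)) = 2πi · (-i)^|ℓ| · G(w)^|ℓ| / √(w² + 2c)`
  (`contour_key`): the only pole inside the unit disc is `u = -i G(w)`. That it is inside, i.e. that
  the chosen branch of the square root is the right one, is the content of `re_mul_conj_pos`; in
  terms of `p = √(z - √(2c))`, `q = √(z + √(2c))`, `z = -iw`, the pole is `(q - p)/(q + p)`, and the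
  claim is that `Re (p * conj q) > 0`. The symmetry `u ↦ 1/u` reduces `ℓ` to `|ℓ|`.
* For `‖u₁‖ = ‖u₂‖ = 1`, Cauchy's formula in the variable `w` gives
  `∮ dw/w · 1 / ((w - iβA)(1/w - iβB)) = 2πi / (1 + β²AB)` (`contour_w`), which is `1/P̃` up to the
  constant `-2(1 + a²)`.

Inserting the first formula at `w` and at `1/w` in the single integral, exchanging the order of
integration (`circle_swap`), and evaluating the `w`-integral by the second formula gives the
theorem. -/

open MeasureTheory

noncomputable section

/-- The branch of `√(w² + 2c)` defined by
`√(w² + 2c) := i·√(−√(2c) − i w)·√(√(2c) − i w)` with principal-branch square roots. -/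
def sqrtc (c : ℝ) (w : ℂ) : ℂ :=
  Complex.I * csqrt (-(Real.sqrt (2*c) : ℂ) - Complex.I * w) *
    csqrt ((Real.sqrt (2*c) : ℂ) - Complex.I * w)

/-- `G(w) = (1/√(2c))·(w − √(w² + 2c))`. -/
def Gfun (c : ℝ) (w : ℂ) : ℂ := ((Real.sqrt (2*c) : ℂ))⁻¹ * (w - sqrtc c w)

/-- The characteristic polynomial in the rotated coordinates:
`P̃(u₁, u₂) = −2(1 + a²)·(1 + (c/2)·(u₁ + 1/u₁)·(u₂ + 1/u₂))` with `c = a/(1+a²)`. -/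
def Ptilde (a : ℝ) (u₁ u₂ : ℂ) : ℂ :=
  -2*(1+(a:ℂ)^2)*(1 + (((a/(1+a^2) : ℝ)) : ℂ)/2*(u₁+1/u₁)*(u₂+1/u₂))

/-- The double contour integral
`I_a(k, ℓ) = (1/(2πi)²) ∮∮ (du₁/u₁)(du₂/u₂) u₁^ℓ u₂^k / P̃(u₁,u₂)`
over positively oriented unit circles. -/
def Ia (a : ℝ) (k l : ℤ) : ℂ :=
  (1/(2*(Real.pi:ℂ)*Complex.I))^2 *
    (∮ u₁ in C(0,1), (1/u₁) * (∮ u₂ in C(0,1), (1/u₂) * (u₁^l * u₂^k / Ptilde a u₁ u₂)))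

/-! ### The branch of the square root -/

lemma csqrt_sq_s10 (z : ℂ) : csqrt z ^ 2 = z := by
  unfold csqrt; rw [one_div]; exact Complex.cpow_ofNat_inv_pow z 2

lemma csqrt_re_nonneg (z : ℂ) : 0 ≤ (csqrt z).re := by
  unfold csqrt; rw [one_div, Complex.cpow_inv_two_re]; exact Real.sqrt_nonneg _

/-- On the branch cut, the principal square root lies on the nonnegative imaginary axis. -/
lemma csqrt_im_nonneg (z : ℂ) (h : (csqrt z).re = 0) : 0 ≤ (csqrt z).im := by
  have h2 : z.im = 0 := by
    have := congrArg Complex.im (csqrt_sq_s10 z)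
    simp [pow_two, h] at this
    exact this.symm
  unfold csqrt
  rw [one_div, Complex.cpow_inv_two_im_eq_sqrt h2.ge]
  exact Real.sqrt_nonneg _

/-- Off the segment `[-b, b]`, the principal square roots of `z - b` and `z + b` make an acute
angle. -/
lemma re_mul_conj_pos (b : ℝ) (z : ℂ) (hb : 0 ≤ b) (hz : b < ‖z‖) :
    0 < (csqrt (z - b)).re * (csqrt (z + b)).re + (csqrt (z - b)).im * (csqrt (z + b)).im := by
  have hp := csqrt_sq_s10 (z - b)
  have hq := csqrt_sq_s10 (z + b)
  have p1 := csqrt_re_nonneg (z - b)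
  have q1 := csqrt_re_nonneg (z + b)
  have p2 := csqrt_im_nonneg (z - b)
  have q2 := csqrt_im_nonneg (z + b)
  generalize csqrt (z - b) = p at *
  generalize csqrt (z + b) = q at *
  have hz2 : b ^ 2 < z.re ^ 2 + z.im ^ 2 := by
    have : b ^ 2 < ‖z‖ ^ 2 := by gcongr
    rw [Complex.sq_norm, Complex.normSq_apply] at this
    linarith
  have a1 := congrArg Complex.re hp
  have a2 := congrArg Complex.im hp
  have a3 := congrArg Complex.re hq
  have a4 := congrArg Complex.im hq
  simp [pow_two] at a1 a2 a3 a4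
  obtain ⟨x, y⟩ := z
  obtain ⟨p, p'⟩ := p
  obtain ⟨q, q'⟩ := q
  simp only at *
  rcases p1.eq_or_lt with hp0 | hp0
  · subst hp0
    have hy : y = 0 := by linarith
    subst hy
    have h4 : q * q' = 0 := by linarith
    rcases mul_eq_zero.1 h4 with h | h
    · subst h
      have P := p2 rfl
      have Q := q2 rfl
      have P' : p' ≠ 0 := by
        rintro rfl
        have : x = b := by linarith
        subst this; linarith
      have Q' : q' ≠ 0 := by
        rintro rfl
        have : x = -b := by linarith
        subst this; nlinarith
      have := mul_pos (lt_of_le_of_ne P P'.symm) (lt_of_le_of_ne Q Q'.symm)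
      linarith
    · subst h
      nlinarith [sq_nonneg p', sq_nonneg q]
  · rcases q1.eq_or_lt with hq0 | hq0
    · subst hq0
      have hy : y = 0 := by linarith
      subst hy
      nlinarith [sq_nonneg p, sq_nonneg q', sq_nonneg p',
        (mul_eq_zero.1 (show p * p' = 0 by linarith)).resolve_left hp0.ne']
    · have h1 : 0 ≤ (p * q) * (p' * q') := by
        have e1 : p * p' = y / 2 := by linarith
        have e2 : q * q' = y / 2 := by linarith
        have : (p * q) * (p' * q') = (y / 2) * (y / 2) := by
          linear_combination q * q' * e1 + y / 2 * e2
        rw [this]; exact mul_self_nonneg _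
      have h2 := mul_pos hp0 hq0
      have := nonneg_of_mul_nonneg_right h1 h2
      linarith

/-- The algebraic description of `√(w² + 2c)` and `G(w)` by two numbers `p`, `q` with
`p² = -iw - √(2c)` and `q² = -iw + √(2c)`: the pole `(q - p)/(q + p) = -i G(w)` lies in the open
unit disc. -/
lemma exists_pq (c : ℝ) (hc0 : 0 < c) (hc1 : 2 * c < 1) (w : ℂ) (hw : ‖w‖ = 1) :
    ∃ p q : ℂ, p ≠ 0 ∧ q ≠ 0 ∧ q + p ≠ 0 ∧ ‖q - p‖ < ‖q + p‖ ∧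
      w = Complex.I * (p ^ 2 + q ^ 2) / 2 ∧ (Real.sqrt (2 * c) : ℂ) = (q ^ 2 - p ^ 2) / 2 ∧
      sqrtc c w = Complex.I * p * q ∧ -Complex.I * Gfun c w = (q - p) / (q + p) := by
  set b := Real.sqrt (2 * c) with hb
  have hb0 : 0 < b := Real.sqrt_pos.2 (by linarith)
  have hb1 : b < 1 := by rw [hb, Real.sqrt_lt' one_pos]; linarith
  have hpos := re_mul_conj_pos b (-Complex.I * w) hb0.le (by simpa [hw] using hb1)
  have hp := csqrt_sq_s10 (-Complex.I * w - b)
  have hq := csqrt_sq_s10 (-Complex.I * w + b)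
  have hs : sqrtc c w = Complex.I * csqrt (-Complex.I * w - b) * csqrt (-Complex.I * w + b) := by
    unfold sqrtc
    rw [← hb]
    congr 2
    · congr 1; ring
    · ring
  generalize csqrt (-Complex.I * w - b) = p at *
  generalize csqrt (-Complex.I * w + b) = q at *
  have hlt : ‖q - p‖ < ‖q + p‖ := by
    rw [← sq_lt_sq₀ (norm_nonneg _) (norm_nonneg _), Complex.sq_norm, Complex.sq_norm,
      Complex.normSq_apply, Complex.normSq_apply]
    simp only [Complex.sub_re, Complex.sub_im, Complex.add_re, Complex.add_im]
    nlinarith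
  have hqp : q + p ≠ 0 := by
    intro h
    rw [h, norm_zero] at hlt
    exact absurd hlt (not_lt.2 (norm_nonneg _))
  have hw' : w = Complex.I * (p ^ 2 + q ^ 2) / 2 := by
    rw [hp, hq]; linear_combination w * Complex.I_sq
  have hbb : (b : ℂ) = (q ^ 2 - p ^ 2) / 2 := by rw [hp, hq]; ring
  have hb0' : (b : ℂ) ≠ 0 := by exact_mod_cast hb0.ne'
  refine ⟨p, q, ?_, ?_, hqp, hlt, hw', hbb, hs, ?_⟩
  · rintro rfl; simp at hpos
  · rintro rfl; simp at hpos
  · unfold Gfun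
    rw [← hb, hs, eq_div_iff hqp, mul_assoc, mul_assoc, inv_mul_eq_div, mul_div_assoc',
      div_eq_iff hb0', hbb, hw']
    linear_combination (-(p ^ 2 + q ^ 2 - 2 * p * q) * (q + p) / 2) * Complex.I_sq

/-! ### The contour integrals -/

lemma circle_inv (f : ℂ → ℂ) :
    (∮ u in C(0,1), (1/u) * f (1/u)) = ∮ u in C(0,1), (1/u) * f u := by
  have key : ∀ g : ℂ → ℂ, (∮ u in C(0,1), (1/u) * g u) =
      ∫ θ in (0:ℝ)..2*Real.pi, Complex.I * g (circleMap 0 1 θ) := by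
    intro g
    simp only [circleIntegral, deriv_circleMap, smul_eq_mul]
    congr 1; ext θ
    have : circleMap 0 1 θ ≠ 0 := circleMap_ne_center one_ne_zero
    field_simp
  rw [key (fun u => f (1/u)), key f]
  have h := intervalIntegral.integral_comp_sub_left (a := 0) (b := 2*Real.pi)
    (fun θ => Complex.I * f (circleMap 0 1 θ)) (2*Real.pi)
  simp only [sub_self, sub_zero] at h
  rw [← h]
  congr 1; ext θ
  have : circleMap 0 1 (2*Real.pi - θ) = 1 / circleMap 0 1 θ := by
    rw [show 2*Real.pi - θ = -θ + 2*Real.pi by ring, periodic_circleMap 0 1 (-θ)]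
    simp [circleMap, Complex.exp_neg]
  rw [this]

/-- The residue computation: `uw - iβ(u² + 1) = -(i/4)((q + p)u - (q - p))((q - p)u - (q + p))`, and
only the root `(q - p)/(q + p)` lies in the unit disc. -/
lemma contour_key_nat (c : ℝ) (hc0 : 0 < c) (hc1 : 2 * c < 1) (w : ℂ) (hw : ‖w‖ = 1) (n : ℕ) :
    (∮ u in C(0,1), (1/u) *
      (u ^ (n:ℤ) / (w - Complex.I * (Real.sqrt (2*c) / 2) * (u + 1/u)))) =
      2 * Real.pi * Complex.I * ((-Complex.I * Gfun c w) ^ n / sqrtc c w) := by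
  obtain ⟨p, q, hp, hq, hqp, hlt, hww, hb, hs, hG⟩ := exists_pq c hc0 hc1 w hw
  have hne : ∀ u ∈ Metric.closedBall (0:ℂ) 1, (q - p) * u - (q + p) ≠ 0 := by
    intro u hu h
    have hu : ‖u‖ ≤ 1 := by simpa using hu
    have h2 : (q - p) * u = q + p := by linear_combination h
    have h3 := congrArg norm h2
    rw [norm_mul] at h3
    nlinarith [norm_nonneg (q - p), norm_nonneg u]
  have hr : (q - p) / (q + p) ∈ Metric.ball (0:ℂ) 1 := by
    rw [mem_ball_zero_iff, norm_div, div_lt_one (by positivity)]; exact hlt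
  have hd : DifferentiableOn ℂ
      (fun u : ℂ => 4 * Complex.I * u ^ n / ((q + p) * ((q - p) * u - (q + p))))
      (Metric.closedBall 0 1) := by
    intro u hu
    have h1 : (q + p) * ((q - p) * u - (q + p)) ≠ 0 := mul_ne_zero hqp (hne u hu)
    have : DifferentiableAt ℂ
      (fun u : ℂ => 4 * Complex.I * u ^ n / ((q + p) * ((q - p) * u - (q + p)))) u := by
      fun_prop (disch := assumption)
    exact this.differentiableWithinAt
  have hC := hd.circleIntegral_sub_inv_smul hr
  rw [hG, hs]
  have e : 2 * Real.pi * Complex.I * (((q - p) / (q + p)) ^ n / (Complex.I * p * q)) =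
      (2 * Real.pi * Complex.I : ℂ) • (4 * Complex.I * ((q - p) / (q + p)) ^ n /
        ((q + p) * ((q - p) * ((q - p) / (q + p)) - (q + p)))) := by
    rw [smul_eq_mul]
    congr 1
    have : (q + p) * ((q - p) * ((q - p) / (q + p)) - (q + p)) = -4 * p * q := by
      field_simp; ring
    rw [this]
    have hI := Complex.I_ne_zero
    rw [div_eq_div_iff (by positivity) (by simp [hp, hq])]
    linear_combination (-4 * ((q - p) / (q + p)) ^ n * p * q) * Complex.I_sq
  rw [e, ← hC]
  refine circleIntegral.integral_congr zero_le_one fun u hu => ?_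
  have hu1 : ‖u‖ = 1 := by simpa using hu
  have hu0 : u ≠ 0 := by rintro rfl; simp at hu1
  have h1 := hne u (Metric.sphere_subset_closedBall hu)
  have h2 : u - (q - p) / (q + p) ≠ 0 := by
    intro h
    rw [← sub_eq_zero.1 h] at hr
    simp [hu1] at hr
  simp only [smul_eq_mul, zpow_natCast]
  have e2 : u * (w - Complex.I * (Real.sqrt (2*c) / 2) * (u + 1/u)) =
      (u - (q - p) / (q + p)) * ((q + p) * ((q - p) * u - (q + p))) * (-Complex.I / 4) := by
    rw [hww, hb]; field_simp; ring
  have e3 : (1/u) * (u ^ n / (w - Complex.I * (Real.sqrt (2*c) / 2) * (u + 1/u))) =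
      u ^ n / (u * (w - Complex.I * (Real.sqrt (2*c) / 2) * (u + 1/u))) := by
    rw [one_div_mul_eq_div, div_div, mul_comm u]
  rw [e3, e2, inv_mul_eq_div, div_div, div_eq_div_iff]
  · linear_combination (u ^ n * (q + p) * ((q - p) * u - (q + p)) *
      (u - (q - p) / (q + p))) * Complex.I_sq
  · simp [h1, h2, hqp, Complex.I_ne_zero]
  · simp [h1, h2, hqp]

/-- The `u`-integral, by residues; negative exponents reduce to positive ones by `u ↦ 1/u`. -/
lemma contour_key (c : ℝ) (hc0 : 0 < c) (hc1 : 2 * c < 1) (w : ℂ) (hw : ‖w‖ = 1) (l : ℤ) :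
    (∮ u in C(0,1), (1/u) *
      (u ^ l / (w - Complex.I * (Real.sqrt (2*c) / 2) * (u + 1/u)))) =
      2 * Real.pi * Complex.I * ((-Complex.I * Gfun c w) ^ |l| / sqrtc c w) := by
  obtain ⟨n, rfl | rfl⟩ := l.eq_nat_or_neg
  · rw [contour_key_nat c hc0 hc1 w hw n, Nat.abs_cast, zpow_natCast]
  · rw [abs_neg, Nat.abs_cast, zpow_natCast, ← contour_key_nat c hc0 hc1 w hw n, ← circle_inv]
    simp only [one_div, inv_inv, inv_zpow', neg_neg, add_comm]

/-- The `w`-integral, by Cauchy's formula at the pole `x`; the second pole `1/y` is outside. -/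
lemma contour_w (x y : ℂ) (hx : ‖x‖ < 1) (hy : ‖y‖ < 1) :
    (∮ w in C(0,1), (1/w) * (1 / ((w - x) * (1/w - y)))) =
      2 * Real.pi * Complex.I / (1 - x * y) := by
  have hne : ∀ u ∈ Metric.closedBall (0:ℂ) 1, 1 - u * y ≠ 0 := by
    intro u hu h
    have hu : ‖u‖ ≤ 1 := by simpa using hu
    have h2 : u * y = 1 := by linear_combination -h
    have h3 := congrArg norm h2
    rw [norm_mul, norm_one] at h3
    nlinarith [norm_nonneg y, norm_nonneg u]
  have hd : DifferentiableOn ℂ (fun u : ℂ => 1 / (1 - u * y)) (Metric.closedBall 0 1) := by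
    intro u hu
    have h1 := hne u hu
    have : DifferentiableAt ℂ (fun u : ℂ => 1 / (1 - u * y)) u := by
      fun_prop (disch := assumption)
    exact this.differentiableWithinAt
  have hC := hd.circleIntegral_sub_inv_smul (w := x) (by simpa using hx)
  rw [smul_eq_mul, mul_one_div] at hC
  rw [← hC]
  refine circleIntegral.integral_congr zero_le_one fun u hu => ?_
  have hu1 : ‖u‖ = 1 := by simpa using hu
  have hu0 : u ≠ 0 := by rintro rfl; simp at hu1
  have h1 := hne u (Metric.sphere_subset_closedBall hu)
  have h2 : u - x ≠ 0 := by
    intro h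
    rw [← sub_eq_zero.1 h, hu1] at hx
    exact lt_irrefl _ hx
  have h3 : 1 / u - y = (1 - u * y) / u := by field_simp
  simp only [smul_eq_mul]
  rw [h3]
  field_simp

/-! ### Exchanging the order of integration -/

lemma circle_swap (f : ℂ → ℂ → ℂ)
    (hf : Continuous fun t : ℝ × ℝ => f (circleMap 0 1 t.1) (circleMap 0 1 t.2)) :
    (∮ z in C(0,1), ∮ w in C(0,1), f z w) = ∮ w in C(0,1), ∮ z in C(0,1), f z w := by
  simp only [circleIntegral, deriv_circleMap, smul_eq_mul, ← intervalIntegral.integral_const_mul]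
  rw [MeasureTheory.intervalIntegral_intervalIntegral_swap]
  · congr 1; ext θ
    congr 1; ext φ
    ring
  · rw [Set.uIoc_of_le (by positivity)]
    have hc := continuous_circleMap 0 1
    have hF : Continuous (Function.uncurry fun θ φ : ℝ => circleMap 0 1 θ * Complex.I *
        (circleMap 0 1 φ * Complex.I * f (circleMap 0 1 θ) (circleMap 0 1 φ))) :=
      ((hc.comp continuous_fst).mul continuous_const).mul
        (((hc.comp continuous_snd).mul continuous_const).mul hf)
    exact (hF.continuousOn.integrableOn_compact (isCompact_Icc.prod isCompact_Icc)).mono_set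
      (Set.prod_mono Set.Ioc_subset_Icc_self Set.Ioc_subset_Icc_self)

lemma circle_cont {X : Type*} [TopologicalSpace X] (f : X → ℂ → ℂ)
    (hf : Continuous fun t : X × ℝ => f t.1 (circleMap 0 1 t.2)) :
    Continuous fun x => ∮ w in C(0,1), f x w := by
  simp only [circleIntegral, deriv_circleMap, smul_eq_mul]
  refine intervalIntegral.continuous_parametric_intervalIntegral_of_continuous' ?_ _ _
  exact (((continuous_circleMap 0 1).comp continuous_snd).mul continuous_const).mul hf

/-! ### The triple integral -/

/-- The integrand of the `u`-integral in `contour_key`, with `J` standing for `iβ`. It is irreducible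
so that unification treats products of kernels as products of atoms. -/
@[irreducible] def kern (J : ℂ) (l : ℤ) (w u : ℂ) : ℂ := (1/u) * (u ^ l / (w - J * (u + 1/u)))

lemma norm_pole_lt (J u : ℂ) (hJ : ‖J‖ < 1/2) (hu : ‖u‖ = 1) : ‖J * (u + 1/u)‖ < 1 := by
  have h : ‖u + 1/u‖ ≤ 2 := by
    refine (norm_add_le _ _).trans ?_
    rw [norm_div, hu]; norm_num
  rw [norm_mul]
  nlinarith [norm_nonneg J]

lemma kern_cont (J : ℂ) (hJ : ‖J‖ < 1/2) (l : ℤ) :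
    Continuous fun t : ℝ × ℝ => kern J l (circleMap 0 1 t.1) (circleMap 0 1 t.2) := by
  have hc := continuous_circleMap 0 1
  have h0 : ∀ t : ℝ, circleMap 0 1 t ≠ 0 := fun t => circleMap_ne_center one_ne_zero
  have hn : ∀ t : ℝ, ‖circleMap 0 1 t‖ = 1 := fun t => by simp
  have hz : Continuous fun t : ℝ => circleMap 0 1 t ^ l := hc.zpow₀ l fun t => Or.inl (h0 t)
  have hi : Continuous fun t : ℝ => 1 / circleMap 0 1 t := continuous_const.div hc h0
  have hD : ∀ t : ℝ × ℝ,
      circleMap 0 1 t.1 - J * (circleMap 0 1 t.2 + 1 / circleMap 0 1 t.2) ≠ 0 := by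
    intro t h
    have := norm_pole_lt J _ hJ (hn t.2)
    rw [← sub_eq_zero.1 h, hn] at this
    exact lt_irrefl _ this
  unfold kern
  refine (hi.comp continuous_snd).mul ((hz.comp continuous_snd).div ?_ hD)
  exact (hc.comp continuous_fst).sub
    (continuous_const.mul ((hc.comp continuous_snd).add (hi.comp continuous_snd)))

lemma continuous_one_div_circleMap : Continuous fun t : ℝ => 1 / circleMap 0 1 t :=
  continuous_const.div (continuous_circleMap 0 1) fun _ => circleMap_ne_center one_ne_zero

/-- On the unit circle, inversion is `θ ↦ -θ`, so continuity passes from `w` to `1/w`. -/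
lemma kern_cont_inv (J : ℂ) (hJ : ‖J‖ < 1/2) (l : ℤ) :
    Continuous fun t : ℝ × ℝ => kern J l (1 / circleMap 0 1 t.1) (circleMap 0 1 t.2) := by
  have h := (kern_cont J hJ l).comp
    (Continuous.prodMk (continuous_fst.neg : Continuous fun t : ℝ × ℝ => -t.1) continuous_snd)
  refine h.congr fun t => ?_
  have : circleMap 0 1 (-t.1) = 1 / circleMap 0 1 t.1 := by simp [circleMap, Complex.exp_neg]
  simp only [Function.comp_apply, Pi.neg_apply, this]

/-- The `w`-integral of the triple integrand, by `contour_w`. -/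
lemma triple_inner (J : ℂ) (hJ : ‖J‖ < 1/2) (k l : ℤ) (u₁ u₂ : ℂ) (hu1 : ‖u₁‖ = 1)
    (hu2 : ‖u₂‖ = 1) :
    (∮ w in C(0,1), ((1/w) * kern J l w u₁) * kern J k (1/w) u₂) =
      2 * Real.pi * Complex.I * (1/u₁) * ((1/u₂) *
        (u₁ ^ l * u₂ ^ k / (1 - J ^ 2 * (u₁ + 1/u₁) * (u₂ + 1/u₂)))) := by
  have hw := contour_w _ _ (norm_pole_lt J u₁ hJ hu1) (norm_pole_lt J u₂ hJ hu2)
  have s3 : ∀ w, ((1/w) * kern J l w u₁) * kern J k (1/w) u₂ =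
      ((1/u₁) * (1/u₂) * (u₁ ^ l * u₂ ^ k)) *
        ((1/w) * (1 / ((w - J * (u₁ + 1/u₁)) * (1/w - J * (u₂ + 1/u₂))))) := by
    intro w
    simp only [kern, div_eq_mul_inv, mul_inv]
    ring
  simp only [s3]
  rw [circleIntegral.integral_const_mul, hw,
    show J * (u₁ + 1/u₁) * (J * (u₂ + 1/u₂)) = J ^ 2 * (u₁ + 1/u₁) * (u₂ + 1/u₂) by ring]
  ring

/-- The integral over `w` and `u₂`, for fixed `u₁`, in the exchanged order. -/
lemma triple_middle (J : ℂ) (hJ : ‖J‖ < 1/2) (k l : ℤ) (u₁ : ℂ) (hu1 : ‖u₁‖ = 1) :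
    (∮ w in C(0,1), ((1/w) * ∮ u in C(0,1), kern J k (1/w) u) * kern J l w u₁) =
    2 * Real.pi * Complex.I * ((1/u₁) * ∮ u₂ in C(0,1), (1/u₂) *
      (u₁ ^ l * u₂ ^ k / (1 - J ^ 2 * (u₁ + 1/u₁) * (u₂ + 1/u₂)))) := by
  obtain ⟨φ, hφ⟩ : ∃ φ, circleMap 0 1 φ = u₁ := by
    have : u₁ ∈ Set.range (circleMap 0 1) := by rw [range_circleMap]; simpa using hu1
    exact this
  have hl : Continuous fun t : ℝ × ℝ => kern J l (circleMap 0 1 t.1) u₁ := by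
    rw [← hφ]
    exact (kern_cont J hJ l).comp ((continuous_fst.prodMk continuous_const :
      Continuous fun t : ℝ × ℝ => (t.1, φ)))
  have s2 : ∀ w, ((1/w) * ∮ u in C(0,1), kern J k (1/w) u) * kern J l w u₁ =
      ∮ u₂ in C(0,1), ((1/w) * kern J l w u₁) * kern J k (1/w) u₂ := by
    intro w
    rw [circleIntegral.integral_const_mul ((1/w) * kern J l w u₁) (fun u₂ => kern J k (1/w) u₂)]
    ring
  simp only [s2]
  rw [circle_swap (fun w u₂ => ((1/w) * kern J l w u₁) * kern J k (1/w) u₂)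
    (((continuous_one_div_circleMap.comp continuous_fst).mul hl).mul (kern_cont_inv J hJ k)),
    ← mul_assoc, ← circleIntegral.integral_const_mul]
  refine circleIntegral.integral_congr zero_le_one fun u₂ hu₂ => ?_
  exact triple_inner J hJ k l u₁ u₂ hu1 (by simpa using hu₂)

/-- Both evaluations of the triple integral of
`(1/w) · kern J l w u₁ · kern J k (1/w) u₂`. -/
lemma triple (J : ℂ) (hJ : ‖J‖ < 1/2) (k l : ℤ) :
    (∮ w in C(0,1), (1/w) *
      ((∮ u in C(0,1), kern J l w u) * ∮ u in C(0,1), kern J k (1/w) u)) =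
    2 * Real.pi * Complex.I * ∮ u₁ in C(0,1), (1/u₁) * ∮ u₂ in C(0,1), (1/u₂) *
      (u₁ ^ l * u₂ ^ k / (1 - J ^ 2 * (u₁ + 1/u₁) * (u₂ + 1/u₂))) := by
  have hI : Continuous fun t : ℝ => ∮ u in C(0,1), kern J k (1 / circleMap 0 1 t) u :=
    circle_cont (fun t u => kern J k (1 / circleMap 0 1 t) u) (kern_cont_inv J hJ k)
  have s1 : ∀ w, (1/w) *
      ((∮ u in C(0,1), kern J l w u) * ∮ u in C(0,1), kern J k (1/w) u) =
      ∮ u₁ in C(0,1), ((1/w) * ∮ u in C(0,1), kern J k (1/w) u) * kern J l w u₁ := by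
    intro w
    rw [circleIntegral.integral_const_mul ((1/w) * ∮ u in C(0,1), kern J k (1/w) u)
      (fun u₁ => kern J l w u₁)]
    ring
  simp only [s1]
  rw [circle_swap (fun w u₁ => ((1/w) * ∮ u in C(0,1), kern J k (1/w) u) * kern J l w u₁)
    (((continuous_one_div_circleMap.comp continuous_fst).mul (hI.comp continuous_fst)).mul
      (kern_cont J hJ l)), ← circleIntegral.integral_const_mul]
  refine circleIntegral.integral_congr zero_le_one fun u₁ hu₁ => ?_
  exact triple_middle J hJ k l u₁ (by simpa using hu₁)

theorem stmt10 (a : ℝ) (ha0 : 0 < a) (ha1 : a < 1) (k l : ℤ) :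
    Ia a k l =
      -(Complex.I ^ (-(|k| + |l|)) / (2*(1+(a:ℂ)^2) * (2*(Real.pi:ℂ)*Complex.I))) *
        (∮ w in C(0,1), (1/w) *
          (Gfun (a/(1+a^2)) w ^ |l| * Gfun (a/(1+a^2)) (1/w) ^ |k| /
            (sqrtc (a/(1+a^2)) w * sqrtc (a/(1+a^2)) (1/w)))) := by
  have hT : (2 * (Real.pi : ℂ) * Complex.I) ≠ 0 := Complex.two_pi_I_ne_zero
  have hA : (1 + (a:ℂ)^2) ≠ 0 := by
    have : (1 + a^2 : ℝ) ≠ 0 := by positivity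
    exact_mod_cast this
  have hc0 : 0 < a/(1+a^2) := by positivity
  have hc1 : 2 * (a/(1+a^2)) < 1 := by
    rw [mul_div_assoc', div_lt_one (by positivity)]
    nlinarith [sq_pos_of_pos (sub_pos.2 ha1)]
  unfold Ia Ptilde
  generalize a/(1+a^2) = c at *
  set J : ℂ := Complex.I * (Real.sqrt (2*c) / 2) with hJdef
  have hJ : ‖J‖ < 1/2 := by
    have : Real.sqrt (2*c) < 1 := by rw [Real.sqrt_lt' one_pos]; linarith
    rw [hJdef, norm_mul, norm_div, Complex.norm_I, Complex.norm_real, Real.norm_eq_abs,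
      abs_of_nonneg (Real.sqrt_nonneg _), Complex.norm_ofNat]
    linarith
  have hJ2 : J ^ 2 = -((c:ℂ)/2) := by
    have h : (Real.sqrt (2*c) : ℂ) ^ 2 = 2 * c := by
      have := Real.sq_sqrt (show 0 ≤ 2 * c by linarith)
      exact_mod_cast this
    rw [hJdef, mul_pow, div_pow, h, Complex.I_sq]; ring
  have hpow : ∀ w w' : ℂ, Complex.I ^ (-(|k| + |l|)) * (Gfun c w ^ |l| * Gfun c w' ^ |k|) =
      (-Complex.I * Gfun c w) ^ |l| * (-Complex.I * Gfun c w') ^ |k| := by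
    intro w w'
    rw [mul_zpow, mul_zpow, ← Complex.inv_I, zpow_neg, ← inv_zpow,
      zpow_add₀ (inv_ne_zero Complex.I_ne_zero)]
    ring
  have hR : (2 * (Real.pi : ℂ) * Complex.I) ^ 2 * (Complex.I ^ (-(|k| + |l|)) *
      ∮ w in C(0,1), (1/w) * (Gfun c w ^ |l| * Gfun c (1/w) ^ |k| /
        (sqrtc c w * sqrtc c (1/w)))) =
      ∮ w in C(0,1), (1/w) *
        ((∮ u in C(0,1), kern J l w u) * ∮ u in C(0,1), kern J k (1/w) u) := by
    rw [← mul_assoc, ← circleIntegral.integral_const_mul]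
    refine circleIntegral.integral_congr zero_le_one fun w hw => ?_
    have hw1 : ‖w‖ = 1 := by simpa using hw
    have h1 := contour_key c hc0 hc1 w hw1 l
    have h2 := contour_key c hc0 hc1 (1/w) (by simp [hw1]) k
    simp only [kern]
    rw [h1, h2]
    linear_combination ((2 * (Real.pi : ℂ) * Complex.I) ^ 2 * (1/w) *
      (sqrtc c w)⁻¹ * (sqrtc c (1/w))⁻¹) * hpow w (1/w)
  have hL : (∮ u₁ in C(0,1), (1/u₁) * ∮ u₂ in C(0,1), (1/u₂) * (u₁ ^ l * u₂ ^ k /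
        (-2*(1+(a:ℂ)^2)*(1 + (c:ℂ)/2*(u₁+1/u₁)*(u₂+1/u₂))))) =
      (-2*(1+(a:ℂ)^2))⁻¹ * ∮ u₁ in C(0,1), (1/u₁) * ∮ u₂ in C(0,1), (1/u₂) *
      (u₁ ^ l * u₂ ^ k / (1 - J ^ 2 * (u₁ + 1/u₁) * (u₂ + 1/u₂))) := by
    have e : ∀ u₁ u₂ : ℂ, (1/u₂) * (u₁ ^ l * u₂ ^ k /
        (-2*(1+(a:ℂ)^2)*(1 + (c:ℂ)/2*(u₁+1/u₁)*(u₂+1/u₂)))) =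
        (-2*(1+(a:ℂ)^2))⁻¹ * ((1/u₂) *
          (u₁ ^ l * u₂ ^ k / (1 - J ^ 2 * (u₁ + 1/u₁) * (u₂ + 1/u₂)))) := by
      intro u₁ u₂
      rw [hJ2, show 1 - -((c:ℂ)/2) * (u₁ + 1/u₁) * (u₂ + 1/u₂) =
        1 + (c:ℂ)/2*(u₁+1/u₁)*(u₂+1/u₂) by ring]
      simp only [div_eq_mul_inv, mul_inv]
      ring
    simp only [e, circleIntegral.integral_const_mul, mul_left_comm _ (-2*(1+(a:ℂ)^2))⁻¹]
  rw [hL]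
  rw [triple J hJ k l] at hR
  generalize (∮ u₁ in C(0,1), (1/u₁) * ∮ u₂ in C(0,1), (1/u₂) *
      (u₁ ^ l * u₂ ^ k / (1 - J ^ 2 * (u₁ + 1/u₁) * (u₂ + 1/u₂)))) = X at *
  generalize Complex.I ^ (-(|k| + |l|)) = P at *
  generalize (∮ w in C(0,1), (1/w) * (Gfun c w ^ |l| * Gfun c (1/w) ^ |k| /
        (sqrtc c w * sqrtc c (1/w)))) = Z at *
  have hX : X = (2 * (Real.pi : ℂ) * Complex.I) * (P * Z) :=
    mul_left_cancel₀ hT (by linear_combination -hR)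
  rw [hX]
  generalize (2 * (Real.pi : ℂ) * Complex.I) = T at *
  field_simp

end
end
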